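/- Fix integers j and k with k ≥ 1, and an integer l with |l| ≤ k−1 and l ≡ k−1 (mod 2). Let S = [j+l−2(k−1), j+l+2(k−1)]_4. Then F_{j,k}|_S = 0. -/

import Mathlib

open MvPolynomial
open scoped Classical

noncomputable section

/-- The set `Q_k`: triples `(r,s,t)` with `|r|+|s| ≤ k-2`, `r+s ≡ k (mod 2)`,
`t ≡ 2|s|-k+2 (mod 4)` and `2|s|-k+2 ≤ t ≤ k-2-2|r|`. -/
def pentagramQ (k : ℤ) : Set (ℤ × ℤ × ℤ) :=
  {p | |p.1| + |p.2.1| ≤ k - 2 ∧ (2 : ℤ) ∣ (p.1 + p.2.1 - k) ∧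
    (4 : ℤ) ∣ (p.2.2 - (2 * |p.2.1| - k + 2)) ∧
    2 * |p.2.1| - k + 2 ≤ p.2.2 ∧ p.2.2 ≤ k - 2 - 2 * |p.1|}

/-- The set `P_k = Q_k ∪ Q_{k+1}`. -/
def pentagramP (k : ℤ) : Set (ℤ × ℤ × ℤ) := pentagramQ k ∪ pentagramQ (k + 1)

/-- The covering relation: `(r',s',t')` covers `(r,s,t)` iff `t' = t + 1` and
`|r'-r| + |s'-s| = 1`. -/
def pentagramCovers (x y : ℤ × ℤ × ℤ) : Prop :=
  y.2.2 = x.2.2 + 1 ∧ |y.1 - x.1| + |y.2.1 - x.2.1| = 1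

/-- The partial order on `P_k`: the reflexive-transitive closure of the covering
relation within `P_k`. -/
def pentagramLe (k : ℤ) : (ℤ × ℤ × ℤ) → (ℤ × ℤ × ℤ) → Prop :=
  Relation.ReflTransGen
    (fun x y => x ∈ pentagramP k ∧ y ∈ pentagramP k ∧ pentagramCovers x y)

/-- An order ideal of `P_k`: a downward-closed subset of `P_k`. -/
def IsPentagramOrderIdeal (k : ℤ) (I : Set (ℤ × ℤ × ℤ)) : Prop :=
  I ⊆ pentagramP k ∧ ∀ x y, y ∈ I → pentagramLe k x y → x ∈ I

/-- `P_k` realized as a `Finset` (it is contained in the displayed finite box). -/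
def pentagramPFinset (k : ℤ) : Finset (ℤ × ℤ × ℤ) :=
  ((Finset.Icc (-(k-1)) (k-1)) ×ˢ (Finset.Icc (-(k-1)) (k-1)) ×ˢ
    (Finset.Icc (-(k-1)) (k-1))).filter (fun p => p ∈ pentagramP k)

/-- The F-polynomial `F_{j,k} = Σ_{order ideals I of P_k} Π_{(r,s,t) ∈ I} y_{3r+s+j}`,
as an element of `ℤ[y_i : i ∈ ℤ] = MvPolynomial ℤ ℤ`. -/
def pentagramF (j k : ℤ) : MvPolynomial ℤ ℤ :=
  ∑ I ∈ (pentagramPFinset k).powerset.filter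
      (fun I : Finset (ℤ × ℤ × ℤ) => IsPentagramOrderIdeal k (↑I : Set (ℤ × ℤ × ℤ))),
    ∏ p ∈ I, X (3 * p.1 + p.2.1 + j)

/-- The ring endomorphism of `ℤ[y_i : i ∈ ℤ]` sending `y_i ↦ -1` for `i ∈ S`
and fixing the other variables; `substNeg S F` is `F|_S`. -/
def substNeg (S : Set ℤ) : MvPolynomial ℤ ℤ →+* MvPolynomial ℤ ℤ :=
  (MvPolynomial.aeval
    (fun i : ℤ => if i ∈ S then (-1 : MvPolynomial ℤ ℤ) else X i)).toRingHom

/-- The arithmetic progression `[a,b]_d = {a, a+d, a+2d, …, b}` (as a subset of `ℤ`). -/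
def AP (a b d : ℤ) : Set ℤ := {x | a ≤ x ∧ x ≤ b ∧ d ∣ (x - a)}

/-!
An element of `Q_{k+1}` is related by covers only to elements of `Q_k`, so whether it may be added
to or removed from an ideal `I` depends on `I ∩ Q_k` alone. Toggling such an element therefore
leaves the set of toggleable elements unchanged. Over the line `s = r - l` one has
`3r + s + j = 4r - l + j ∈ S`, so the elements of `Q_{k+1}` above this line all have weight `-1`;
no other weight matters. As soon as every ideal admits a toggleable element above the line, toggling
one of them, selected from the set of all of them, is a sign-reversing involution.

To find one, walk along the line in the direction `(1, 1)` and compare the heights of `I ∩ Q_k` over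
the two neighbouring diagonals. At the start the column over `(r, s - 1)` is higher than the one
over `(r - 1, s)`, at the end it is not. The ideal property forces the heights of diagonally
adjacent columns to differ by at most `2`, so at a point where the comparison flips, the four
columns around it leave an element of `Q_{k+1}` free to be toggled.
-/

section Involution

open scoped symmDiff

variable {α R : Type*} [DecidableEq α] [CommRing R]

lemma prod_symmDiff_singleton_of_eq_neg_one {w : α → R} {x : α} (hx : w x = -1) (I : Finset α) :
    ∏ y ∈ I ∆ {x}, w y = -∏ y ∈ I, w y := by
  by_cases hxI : x ∈ I
  · have herase : I ∆ {x} = I.erase x := by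
      grind [Finset.mem_symmDiff]
    rw [herase, ← Finset.mul_prod_erase I w hxI, hx, neg_one_mul, neg_neg]
  · have hinsert : I ∆ {x} = insert x I := by
      grind [Finset.mem_symmDiff]
    rw [hinsert, Finset.prod_insert hxI, hx, neg_one_mul]

theorem sum_prod_eq_zero_of_symmDiff_singleton {𝓘 : Finset (Finset α)} {w : α → R}
    {T : Finset α → Set α} (hne : ∀ I ∈ 𝓘, (T I).Nonempty)
    (hw : ∀ I ∈ 𝓘, ∀ x ∈ T I, w x = -1) (hmem : ∀ I ∈ 𝓘, ∀ x ∈ T I, I ∆ {x} ∈ 𝓘)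
    (hT : ∀ I ∈ 𝓘, ∀ x ∈ T I, T (I ∆ {x}) = T I) :
    ∑ I ∈ 𝓘, ∏ x ∈ I, w x = 0 := by
  have some_congr : ∀ {s t : Set α} (hs : s.Nonempty) (ht : t.Nonempty), s = t →
      hs.some = ht.some := by
    rintro s _ hs ht rfl
    rfl
  refine Finset.sum_involution (fun I hI ↦ I ∆ {(hne I hI).some}) (fun I hI ↦ ?_)
    (fun I hI _ hfix ↦ ?_) (fun I hI ↦ hmem I hI _ (hne I hI).some_mem) (fun I hI ↦ ?_)
  · rw [prod_symmDiff_singleton_of_eq_neg_one (hw I hI _ (hne I hI).some_mem), add_neg_cancel]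
  · exact Finset.singleton_ne_empty _ (symmDiff_eq_left.mp hfix)
  · have hx := (hne I hI).some_mem
    rw [some_congr (hne _ (hmem I hI _ hx)) (hne I hI) (hT I hI _ hx),
      symmDiff_symmDiff_cancel_right]

end Involution

section OrderIdeals

open scoped symmDiff

variable {k l r s t : ℤ} {I : Set (ℤ × ℤ × ℤ)}

lemma mem_pentagramQ : (r, s, t) ∈ pentagramQ k ↔ |r| + |s| ≤ k - 2 ∧ (2 : ℤ) ∣ r + s - k ∧
    (4 : ℤ) ∣ t - (2 * |s| - k + 2) ∧ 2 * |s| - k + 2 ≤ t ∧ t ≤ k - 2 - 2 * |r| :=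
  Iff.rfl

lemma disjoint_pentagramQ_succ (k : ℤ) : Disjoint (pentagramQ k) (pentagramQ (k + 1)) := by
  rw [Set.disjoint_left]
  rintro ⟨r, s, t⟩ h h'
  rw [mem_pentagramQ] at h h'
  omega

lemma not_pentagramCovers_of_mem_pentagramQ {x y : ℤ × ℤ × ℤ} (hx : x ∈ pentagramQ k)
    (hy : y ∈ pentagramQ k) : ¬pentagramCovers x y := by
  obtain ⟨r, s, t⟩ := x
  obtain ⟨r', s', t'⟩ := y
  simp only [mem_pentagramQ, pentagramCovers, abs_eq_max_neg] at hx hy ⊢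
  omega

lemma eq_of_pentagramCovers_left {r' s' t' : ℤ} (hx : (r, s, t) ∈ pentagramQ (k + 1))
    (hy : (r', s', t') ∈ pentagramQ k) (hc : pentagramCovers (r', s', t') (r, s, t)) :
    r' = r ∧ (s' = s + 1 ∨ s' = s - 1) ∧ t' = t - 1 := by
  simp only [mem_pentagramQ, pentagramCovers, abs_eq_max_neg] at hx hy hc
  omega

lemma eq_of_pentagramCovers_right {r' s' t' : ℤ} (hx : (r, s, t) ∈ pentagramQ (k + 1))
    (hy : (r', s', t') ∈ pentagramQ k) (hc : pentagramCovers (r, s, t) (r', s', t')) :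
    (r' = r + 1 ∨ r' = r - 1) ∧ s' = s ∧ t' = t + 1 := by
  simp only [mem_pentagramQ, pentagramCovers, abs_eq_max_neg] at hx hy hc
  omega

lemma IsPentagramOrderIdeal.mem_of_pentagramCovers (hI : IsPentagramOrderIdeal k I)
    {x y : ℤ × ℤ × ℤ} (hx : x ∈ pentagramP k) (hy : y ∈ I) (hc : pentagramCovers x y) : x ∈ I :=
  hI.2 x y hy (.single ⟨hx, hI.1 hy, hc⟩)

lemma isPentagramOrderIdeal_of_pentagramCovers (hsub : I ⊆ pentagramP k)
    (hdown : ∀ x ∈ pentagramP k, ∀ y ∈ I, pentagramCovers x y → x ∈ I) :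
    IsPentagramOrderIdeal k I := by
  refine ⟨hsub, fun x y hy hxy ↦ ?_⟩
  induction hxy using Relation.ReflTransGen.head_induction_on with
  | refl => exact hy
  | head hstep _ ih => exact hdown _ hstep.1 _ ih hstep.2.2

/-- The order ideals of `P_k`, as the index set of the sum defining `pentagramF`. -/
def pentagramOrderIdeals (k : ℤ) : Finset (Finset (ℤ × ℤ × ℤ)) :=
  (pentagramPFinset k).powerset.filter fun I ↦ IsPentagramOrderIdeal k (I : Set (ℤ × ℤ × ℤ))

lemma mem_pentagramPFinset {x : ℤ × ℤ × ℤ} : x ∈ pentagramPFinset k ↔ x ∈ pentagramP k := by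
  refine ⟨fun hx ↦ (Finset.mem_filter.mp hx).2, fun hx ↦ Finset.mem_filter.mpr ⟨?_, hx⟩⟩
  obtain ⟨r, s, t⟩ := x
  simp only [pentagramP, Set.mem_union, mem_pentagramQ, abs_eq_max_neg] at hx
  simp only [Finset.mem_product, Finset.mem_Icc]
  omega

lemma mem_pentagramOrderIdeals {I : Finset (ℤ × ℤ × ℤ)} :
    I ∈ pentagramOrderIdeals k ↔ IsPentagramOrderIdeal k (I : Set (ℤ × ℤ × ℤ)) := by
  rw [pentagramOrderIdeals, Finset.mem_filter, Finset.mem_powerset, and_iff_right_iff_imp]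
  exact fun hI x hx ↦ mem_pentagramPFinset.mpr (hI.1 hx)

/-- The elements of `Q_{k+1}` that can be added to or removed from an order ideal `I` of `P_k`
without destroying the ideal property. Only covers in `Q_k` are tested, as an element of `Q_{k+1}`
has no others. -/
def toggleable (k : ℤ) (I : Set (ℤ × ℤ × ℤ)) : Set (ℤ × ℤ × ℤ) :=
  {x | x ∈ pentagramQ (k + 1) ∧ (∀ y ∈ pentagramQ k, pentagramCovers y x → y ∈ I) ∧
    ∀ y ∈ pentagramQ k, pentagramCovers x y → y ∉ I}

lemma IsPentagramOrderIdeal.symmDiff_singleton (hI : IsPentagramOrderIdeal k I) {x : ℤ × ℤ × ℤ}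
    (hx : x ∈ toggleable k I) : IsPentagramOrderIdeal k (I ∆ {x}) := by
  obtain ⟨hxQ, hlower, hupper⟩ := hx
  have mem_iff : ∀ {y}, y ≠ x → (y ∈ I ∆ {x} ↔ y ∈ I) := fun h ↦ by simp [Set.mem_symmDiff, h]
  have mem_Q : ∀ {y}, y ∈ pentagramP k → pentagramCovers y x ∨ pentagramCovers x y →
      y ∈ pentagramQ k := fun hy hc ↦ hy.resolve_right fun hyQ ↦
    hc.elim (not_pentagramCovers_of_mem_pentagramQ hyQ hxQ)
      (not_pentagramCovers_of_mem_pentagramQ hxQ hyQ)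
  refine isPentagramOrderIdeal_of_pentagramCovers (fun y hy ↦ ?_) fun y hy z hz hc ↦ ?_
  · by_cases hyx : y = x
    · exact hyx ▸ Or.inr hxQ
    · exact hI.1 ((mem_iff hyx).mp hy)
  · have hyz : y ≠ z := by
      rintro rfl
      exact absurd hc.1 (by omega)
    by_cases hzx : z = x
    · subst hzx
      exact (mem_iff hyz).mpr (hlower y (mem_Q hy (.inl hc)) hc)
    · have hzI := (mem_iff hzx).mp hz
      have hyx : y ≠ x := by
        rintro rfl
        exact hupper z (mem_Q (hI.1 hzI) (.inr hc)) hc hzI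
      exact (mem_iff hyx).mpr (hI.mem_of_pentagramCovers hy hzI hc)

lemma toggleable_symmDiff_singleton {x : ℤ × ℤ × ℤ} (hx : x ∈ pentagramQ (k + 1)) :
    toggleable k (I ∆ {x}) = toggleable k I := by
  have mem_iff : ∀ y ∈ pentagramQ k, (y ∈ I ∆ {x} ↔ y ∈ I) := fun y hy ↦ by
    simp [Set.mem_symmDiff, (disjoint_pentagramQ_succ k).ne_of_mem hy hx]
  ext y
  simp +contextual only [toggleable, Set.mem_ofPred_eq, mem_iff]

/-- The part of `ℤ³` filled by `I ∩ Q_k`, where each column over a point `(r, s)` is also filled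
below the lowest level occurring in `Q_k`. This makes heights of columns comparable without a case
distinction at the floor, and defines them over points outside the diamond `|r| + |s| ≤ k - 2`. -/
def filled (k : ℤ) (I : Set (ℤ × ℤ × ℤ)) : Set (ℤ × ℤ × ℤ) :=
  {p | p.2.2 < 2 * |p.2.1| - k} ∪ I ∩ pentagramQ k

lemma mem_filled : (r, s, t) ∈ filled k I ↔
    t < 2 * |s| - k ∨ (r, s, t) ∈ I ∧ (r, s, t) ∈ pentagramQ k :=
  Iff.rfl

lemma mem_filled_iff_of_mem_pentagramQ (hQ : (r, s, t) ∈ pentagramQ k) :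
    (r, s, t) ∈ filled k I ↔ (r, s, t) ∈ I := by
  have hfloor : ¬t < 2 * |s| - k := by
    linarith [hQ.2.2.2.1]
  simp only [mem_filled, hfloor, hQ, and_true, false_or]

lemma IsPentagramOrderIdeal.filled_diagonal (hI : IsPentagramOrderIdeal k I) {r' s' : ℤ}
    (hr : |r' - r| = 1) (hs : |s' - s| = 1) (h : (r, s, t) ∈ filled k I) :
    (r', s', t - 2) ∈ filled k I := by
  rw [mem_filled, or_iff_not_imp_left]
  intro hfloor
  obtain hlt | ⟨hmem, hQ⟩ := mem_filled.mp h
  · simp only [abs_eq_max_neg] at *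
    omega
  have hQ_mid : (r', s, t - 1) ∈ pentagramQ (k + 1) := by
    simp only [mem_pentagramQ, abs_eq_max_neg] at *
    omega
  have hQ_end : (r', s', t - 2) ∈ pentagramQ k := by
    simp only [mem_pentagramQ, abs_eq_max_neg] at *
    omega
  have hmem_mid : (r', s, t - 1) ∈ I := by
    refine hI.mem_of_pentagramCovers (Or.inr hQ_mid) hmem ⟨by simp, ?_⟩
    simpa [abs_sub_comm] using hr
  refine ⟨hI.mem_of_pentagramCovers (Or.inl hQ_end) hmem_mid ⟨by ring, ?_⟩, hQ_end⟩
  simpa [abs_sub_comm] using hs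

/-- The filled column over `(r, s - 1)` is higher than the one over `(r - 1, s)`, and `t` is a level
between the two, of the residue modulo `4` that the levels of `Q_{k+1}` over `(r, s)` have. -/
def IsDrop (k : ℤ) (I : Set (ℤ × ℤ × ℤ)) (r s t : ℤ) : Prop :=
  (4 : ℤ) ∣ t - (2 * |s| - k + 1) ∧ (r, s - 1, t - 1) ∈ filled k I ∧ (r - 1, s, t + 1) ∉ filled k I

lemma isDrop_of_add_eq (hs : s ≤ 0) (h : r + s = 1 - k) : IsDrop k I r s (k - 1 + 2 * r) := by
  simp only [IsDrop, mem_filled, mem_pentagramQ, abs_eq_max_neg]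
  omega

lemma not_isDrop_of_add_eq (hs : 1 ≤ s) (h : r + s = k + 1) : ¬IsDrop k I r s t := by
  simp only [IsDrop, mem_filled, mem_pentagramQ, abs_eq_max_neg]
  omega

namespace IsDrop

lemma mem_pentagramQ_succ (hd : IsDrop k I r s t) (hrs : |r| + |s| ≤ k - 1)
    (hpar : (2 : ℤ) ∣ r + s - (k + 1)) : (r, s, t) ∈ pentagramQ (k + 1) := by
  simp only [IsDrop, mem_filled, mem_pentagramQ, abs_eq_max_neg] at *
  omega

lemma mem_toggleable (hd : IsDrop k I r s t) (hrs : |r| + |s| ≤ k - 1)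
    (hpar : (2 : ℤ) ∣ r + s - (k + 1)) (hfilled : (r, s + 1, t - 1) ∈ filled k I)
    (hempty : (r + 1, s, t + 1) ∉ filled k I) : (r, s, t) ∈ toggleable k I := by
  have hQ := hd.mem_pentagramQ_succ hrs hpar
  refine ⟨hQ, ?_, ?_⟩
  · rintro ⟨r', s', t'⟩ hy hc
    obtain ⟨rfl, rfl | rfl, rfl⟩ := eq_of_pentagramCovers_left hQ hy hc
    · exact (mem_filled_iff_of_mem_pentagramQ hy).mp hfilled
    · exact (mem_filled_iff_of_mem_pentagramQ hy).mp hd.2.1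
  · rintro ⟨r', s', t'⟩ hy hc hmem
    obtain ⟨rfl | rfl, rfl, rfl⟩ := eq_of_pentagramCovers_right hQ hy hc
    · exact hempty ((mem_filled_iff_of_mem_pentagramQ hy).mpr hmem)
    · exact hd.2.2 ((mem_filled_iff_of_mem_pentagramQ hy).mpr hmem)

lemma succ_of_mem_filled (hd : IsDrop k I r s t) (hI : IsPentagramOrderIdeal k I)
    (hfilled : (r + 1, s, t + 1) ∈ filled k I) : IsDrop k I (r + 1) (s + 1) (t + 2) := by
  obtain ⟨hmod, -, hempty⟩ := hd
  rw [IsDrop, add_sub_cancel_right, add_sub_cancel_right, show t + 2 - 1 = t + 1 by ring]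
  refine ⟨by simp only [abs_eq_max_neg] at *; omega, hfilled, fun h ↦ hempty ?_⟩
  have hdiag := hI.filled_diagonal (r' := r - 1) (s' := s) (by simp) (by simp) h
  rwa [show t + 2 + 1 - 2 = t + 1 by ring] at hdiag

lemma succ_of_notMem_filled (hd : IsDrop k I r s t) (hI : IsPentagramOrderIdeal k I)
    (hempty : (r, s + 1, t - 1) ∉ filled k I) : IsDrop k I (r + 1) (s + 1) (t - 2) := by
  obtain ⟨hmod, hfilled, -⟩ := hd
  rw [IsDrop, add_sub_cancel_right, add_sub_cancel_right, show t - 2 + 1 = t - 1 by ring]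
  refine ⟨by simp only [abs_eq_max_neg] at *; omega, ?_, hempty⟩
  have hdiag := hI.filled_diagonal (r' := r + 1) (s' := s) (by simp) (by simp) hfilled
  rwa [sub_right_comm] at hdiag

lemma mem_toggleable_or_exists_succ (hd : IsDrop k I r s t) (hI : IsPentagramOrderIdeal k I)
    (hrs : |r| + |s| ≤ k - 1) (hpar : (2 : ℤ) ∣ r + s - (k + 1)) :
    (r, s, t) ∈ toggleable k I ∨ ∃ t', IsDrop k I (r + 1) (s + 1) t' := by
  by_cases hupper : (r + 1, s, t + 1) ∈ filled k I
  · exact Or.inr ⟨_, hd.succ_of_mem_filled hI hupper⟩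
  by_cases hlower : (r, s + 1, t - 1) ∈ filled k I
  · exact Or.inl (hd.mem_toggleable hrs hpar hlower hupper)
  · exact Or.inr ⟨_, hd.succ_of_notMem_filled hI hlower⟩

end IsDrop

theorem IsPentagramOrderIdeal.exists_mem_toggleable (hI : IsPentagramOrderIdeal k I)
    (hl : |l| ≤ k - 1) (hpar : (2 : ℤ) ∣ l - (k - 1)) :
    ∃ x ∈ toggleable k I, x.2.1 = x.1 - l := by
  by_contra! hnone
  -- The line enters the diamond `|r| + |s| ≤ k - 1` at `r = r₀` and leaves it after `k` points.
  obtain ⟨r₀, hr₀⟩ := hpar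
  obtain ⟨hr₀_lower, hr₀_upper⟩ : -(k - 1) ≤ r₀ ∧ r₀ ≤ 0 := by
    rw [abs_le] at hl
    omega
  have hdrop : ∀ n : ℕ, n ≤ k → ∃ t, IsDrop k I (r₀ + n) (r₀ + n - l) t := by
    intro n
    induction n with
    | zero => exact fun _ ↦ ⟨_, isDrop_of_add_eq (by omega) (by omega)⟩
    | succ n ih =>
      intro hn
      push_cast at hn ⊢
      obtain ⟨t, hd⟩ := ih (by omega)
      have hdiamond : |r₀ + n| + |r₀ + n - l| ≤ k - 1 := by
        simp only [abs_eq_max_neg]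
        omega
      obtain ⟨t', hd'⟩ := (hd.mem_toggleable_or_exists_succ hI hdiamond (by omega)).resolve_left
        fun hmem ↦ hnone _ hmem rfl
      rw [← add_assoc, add_sub_right_comm]
      exact ⟨t', hd'⟩
  obtain ⟨t, hd⟩ := hdrop k.toNat (by omega)
  exact not_isDrop_of_add_eq (by omega) (by omega) hd

theorem stmt0_general {R : Type*} [CommRing R] (hl : |l| ≤ k - 1) (hpar : (2 : ℤ) ∣ l - (k - 1))
    {w : ℤ × ℤ × ℤ → R} (hw : ∀ p ∈ pentagramQ (k + 1), p.2.1 = p.1 - l → w p = -1) :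
    ∑ I ∈ pentagramOrderIdeals k, ∏ p ∈ I, w p = 0 := by
  refine sum_prod_eq_zero_of_symmDiff_singleton
    (T := fun I ↦ toggleable k (I : Set (ℤ × ℤ × ℤ)) ∩ {p | p.2.1 = p.1 - l})
    (fun I hI ↦ ?_) (fun I _ p hp ↦ hw p hp.1.1 hp.2) (fun I hI p hp ↦ ?_) (fun I _ p hp ↦ ?_)
  · exact (mem_pentagramOrderIdeals.mp hI).exists_mem_toggleable hl hpar
  · rw [mem_pentagramOrderIdeals, Finset.coe_symmDiff, Finset.coe_singleton]
    exact (mem_pentagramOrderIdeals.mp hI).symmDiff_singleton hp.1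
  · simp only [Finset.coe_symmDiff, Finset.coe_singleton, toggleable_symmDiff_singleton hp.1.1]

lemma substNeg_X_of_mem {S : Set ℤ} {i : ℤ} (hi : i ∈ S) : substNeg S (X i) = -1 := by
  simp [substNeg, hi]

lemma mem_AP_of_mem_pentagramQ (j : ℤ) {p : ℤ × ℤ × ℤ} (hp : p ∈ pentagramQ (k + 1))
    (hline : p.2.1 = p.1 - l) :
    3 * p.1 + p.2.1 + j ∈ AP (j + l - 2 * (k - 1)) (j + l + 2 * (k - 1)) 4 := by
  simp only [AP, pentagramQ, Set.mem_ofPred_eq, abs_eq_max_neg] at hp ⊢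
  omega

end OrderIdeals

theorem stmt0 (j k l : ℤ) (hk : 1 ≤ k) (hl : |l| ≤ k - 1) (hpar : (2 : ℤ) ∣ (l - (k - 1))) :
    substNeg (AP (j + l - 2 * (k - 1)) (j + l + 2 * (k - 1)) 4) (pentagramF j k) = 0 := by
  simp only [pentagramF, map_sum, map_prod]
  exact stmt0_general hl hpar fun p hp hline ↦
    substNeg_X_of_mem (mem_AP_of_mem_pentagramQ j hp hline)

end
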